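/- arXiv:1103.4817 — 3 statements merged into one kernel-verified Lean document; each statement's English description precedes it below -/
import Mathlib

section
/- Let G = A ∗ B be a free product of nontrivial groups whose abelianization G/[G,G] is infinite. Then for any nontrivial commutator word w (a word with all exponent sums zero), the verbal set w[G] is not rational in G. -/
open Pointwise

/-- The verbal set `w[G]`: all values of the word `w` in `G`. -/
def verbalSet (w : FreeGroup ℕ) (G : Type*) [Group G] : Set G :=
  {g | ∃ φ : FreeGroup ℕ →* G, φ w = g}

/-- Exponent sums of a word in the generators, as a finitely supported function. -/
noncomputable def expSum (w : FreeGroup ℕ) : ℕ →₀ ℤ :=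
  Multiplicative.toAdd
    ((FreeGroup.lift fun i => Multiplicative.ofAdd (Finsupp.single i (1 : ℤ))) w)

/-- `e(w)`: the gcd of the exponent sums of the generators in `w` (0 if all are 0). -/
noncomputable def eWord (w : FreeGroup ℕ) : ℕ :=
  (expSum w).support.gcd fun i => ((expSum w) i).natAbs

/-- A word is proper if `w[G] ≠ {1}` and `w[H] ≠ H` for some groups `G`, `H`. -/
def IsProperWord (w : FreeGroup ℕ) : Prop :=
  ∃ (G : Type) (_ : Group G) (H : Type) (_ : Group H),
    verbalSet w G ≠ {1} ∧ verbalSet w H ≠ Set.univ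

/-- Rational subsets of a monoid: the smallest family containing the finite sets and
closed under union, product and submonoid generation (Kleene star). -/
inductive IsRational {M : Type*} [Monoid M] : Set M → Prop
  | finite (s : Set M) (h : s.Finite) : IsRational s
  | union {s t : Set M} : IsRational s → IsRational t → IsRational (s ∪ t)
  | mul {s t : Set M} : IsRational s → IsRational t → IsRational (s * t)
  | star {s : Set M} : IsRational s → IsRational (Submonoid.closure s : Set M)

/-- A rational set on which a homomorphism is constant lies in a single coset of a finitely
generated subgroup of the kernel. -/
theorem IsRational.exists_fg_le_ker {G Q : Type*} [Group G] [Group Q] (π : G →* Q) {R : Set G}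
    (hR : IsRational R) :
    ∀ q : Q, (∀ x ∈ R, π x = q) → ∃ H : Subgroup G, H.FG ∧ H ≤ π.ker ∧
      ∀ x ∈ R, ∀ y ∈ R, x * y⁻¹ ∈ H := by
  induction hR with
  | finite s hs =>
    intro q hq
    refine ⟨Subgroup.closure (s * s⁻¹), ⟨(hs.mul hs.inv).toFinset, by simp⟩, ?_, ?_⟩
    · rw [Subgroup.closure_le]
      rintro _ ⟨x, hx, y, hy, rfl⟩
      have hy' := hq _ hy
      rw [map_inv, inv_eq_iff_eq_inv] at hy'
      simp [hq x hx, hy']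
    · intro x hx y hy
      exact Subgroup.subset_closure (Set.mul_mem_mul hx (Set.inv_mem_inv.2 hy))
  | @union s t _ _ ihs iht =>
    intro q hq
    obtain ⟨H, hH, hHk, hHs⟩ := ihs q fun x hx => hq x (Or.inl hx)
    obtain ⟨K, hK, hKk, hKt⟩ := iht q fun x hx => hq x (Or.inr hx)
    rcases s.eq_empty_or_nonempty with rfl | ⟨u, hu⟩
    · exact ⟨K, hK, hKk, by simpa using hKt⟩
    rcases t.eq_empty_or_nonempty with rfl | ⟨v, hv⟩
    · exact ⟨H, hH, hHk, by simpa using hHs⟩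
    have huv : π (u * v⁻¹) = 1 := by
      simp [hq u (Or.inl hu), hq v (Or.inr hv)]
    refine ⟨H ⊔ K ⊔ Subgroup.zpowers (u * v⁻¹), (hH.sup hK).sup ⟨{u * v⁻¹}, by
      simp [Subgroup.zpowers_eq_closure]⟩, sup_le (sup_le hHk hKk) (by simpa using huv), ?_⟩
    set L := H ⊔ K ⊔ Subgroup.zpowers (u * v⁻¹) with hL
    have hHL : H ≤ L := le_sup_left.trans le_sup_left
    have hKL : K ≤ L := le_sup_right.trans le_sup_left
    have huL : u * v⁻¹ ∈ L := (le_sup_right : _ ≤ L) (Subgroup.mem_zpowers _)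
    have key : ∀ x ∈ s ∪ t, x * v⁻¹ ∈ L := by
      rintro x (hx | hx)
      · simpa [mul_assoc] using L.mul_mem (hHL (hHs x hx u hu)) huL
      · exact hKL (hKt x hx v hv)
    intro x hx y hy
    simpa using L.mul_mem (key x hx) (L.inv_mem (key y hy))
  | @mul s t _ _ ihs iht =>
    intro q hq
    rcases s.eq_empty_or_nonempty with rfl | ⟨u, hu⟩
    · exact ⟨⊥, Subgroup.FG.bot, bot_le, by simp⟩
    rcases t.eq_empty_or_nonempty with rfl | ⟨v, hv⟩
    · exact ⟨⊥, Subgroup.FG.bot, bot_le, by simp⟩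
    obtain ⟨H, hH, hHk, hHs⟩ := ihs (q * (π v)⁻¹) fun x hx => by
      rw [← hq _ (Set.mul_mem_mul hx hv)]; simp
    obtain ⟨K, hK, hKk, hKt⟩ := iht ((π u)⁻¹ * q) fun x hx => by
      rw [← hq _ (Set.mul_mem_mul hu hx)]; simp
    have hKmap : (K.map (MulAut.conj u).toMonoidHom).FG := by
      classical
      obtain ⟨k, rfl⟩ := hK
      exact ⟨k.image (MulAut.conj u).toMonoidHom, by
        rw [Finset.coe_image, MonoidHom.map_closure]⟩
    refine ⟨H ⊔ K.map (MulAut.conj u).toMonoidHom, hH.sup hKmap, sup_le hHk ?_, ?_⟩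
    · rintro _ ⟨k, hk, rfl⟩
      have := hKk hk
      simp_all [MonoidHom.mem_ker]
    · rintro _ ⟨x, hx, y, hy, rfl⟩ _ ⟨x', hx', y', hy', rfl⟩
      set L := H ⊔ K.map (MulAut.conj u).toMonoidHom with hL
      have h1 : x * u⁻¹ ∈ L := (le_sup_left : H ≤ L) (hHs x hx u hu)
      have h2 : u * x'⁻¹ ∈ L := (le_sup_left : H ≤ L) (hHs u hu x' hx')
      have h3 : u * (y * y'⁻¹) * u⁻¹ ∈ L :=
        (le_sup_right : _ ≤ L) ⟨y * y'⁻¹, hKt y hy y' hy', rfl⟩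
      have := L.mul_mem (L.mul_mem h1 h3) h2
      simpa [mul_assoc] using this
  | @star s _ ih =>
    intro q hq
    have hq1 : q = 1 := by simpa using (hq 1 (one_mem _)).symm
    subst hq1
    have hs : ∀ x ∈ s, π x = 1 := fun x hx => hq x (Submonoid.subset_closure hx)
    rcases s.eq_empty_or_nonempty with rfl | ⟨u, hu⟩
    · exact ⟨⊥, Subgroup.FG.bot, bot_le, by simp⟩
    obtain ⟨H, hH, hHk, hHs⟩ := ih 1 hs
    set L := H ⊔ Subgroup.zpowers u with hL
    have key : Submonoid.closure s ≤ L.toSubmonoid := by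
      rw [Submonoid.closure_le]
      intro x hx
      have := L.mul_mem ((le_sup_left : H ≤ L) (hHs x hx u hu))
        ((le_sup_right : _ ≤ L) (Subgroup.mem_zpowers u))
      simpa using this
    refine ⟨L, hH.sup ⟨{u}, by simp [Subgroup.zpowers_eq_closure]⟩,
      sup_le hHk (by simpa using hs u hu), fun x hx y hy => ?_⟩
    exact L.mul_mem (key hx) (L.inv_mem (key hy))

/-- `S` and `T` behave like the sets of elements of `A ∗ B` whose reduced word starts with a
letter from `A`, respectively `B`. -/
structure IsFirstLetterPair {A B G : Type*} [Group A] [Group B] [Group G]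
    (f : A →* G) (g : B →* G) (S T : Set G) : Prop where
  one_notMem_left : (1 : G) ∉ S
  one_notMem_right : (1 : G) ∉ T
  notMem_right : ∀ x ∈ S, x ∉ T
  eq_one : ∀ x, x ∉ S → x ∉ T → x = 1
  mul_mem_left : ∀ a x, a ≠ 1 → x ∉ S → f a * x ∈ S
  mul_mem_right : ∀ b x, b ≠ 1 → x ∉ T → g b * x ∈ T
  induction : ∀ C : G → Prop, C 1 →
    (∀ a x, a ≠ 1 → x ∉ S → C x → C (f a * x)) →
    (∀ b x, b ≠ 1 → x ∉ T → C x → C (g b * x)) → ∀ x, C x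

namespace IsFirstLetterPair

variable {A B G : Type*} [Group A] [Group B] [Group G] {f : A →* G} {g : B →* G} {S T : Set G}

theorem symm (h : IsFirstLetterPair f g S T) : IsFirstLetterPair g f T S where
  one_notMem_left := h.one_notMem_right
  one_notMem_right := h.one_notMem_left
  notMem_right x hx hx' := h.notMem_right x hx' hx
  eq_one x hx hx' := h.eq_one x hx' hx
  mul_mem_left := h.mul_mem_right
  mul_mem_right := h.mul_mem_left
  induction C h1 hl hr := h.induction C h1 hr hl

theorem mul_map_mem (h : IsFirstLetterPair f g S T) (a : A) (x : G) :
    (x ∈ T → x * f a ∈ T) ∧ (x ∈ S → x * f a ∈ S ∨ x * f a = 1) := by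
  have ha : f a ∈ S ∨ f a = 1 := by
    by_cases ha : a = 1
    · simp [ha]
    · simpa using Or.inl (h.mul_mem_left a 1 ha h.one_notMem_left)
  have hST : ∀ x ∈ T, x ∉ S := fun x hx hx' => h.notMem_right x hx' hx
  refine h.induction (fun x => (x ∈ T → x * f a ∈ T) ∧ (x ∈ S → x * f a ∈ S ∨ x * f a = 1))
    ?_ ?_ ?_ x
  · exact ⟨fun h1 => (h.one_notMem_right h1).elim, fun h1 => (h.one_notMem_left h1).elim⟩
  · rintro c x hc hx ⟨ih, -⟩
    have hcx := h.mul_mem_left c x hc hx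
    refine ⟨fun hT => (h.notMem_right _ hcx hT).elim, fun _ => ?_⟩
    by_cases hxT : x ∈ T
    · exact Or.inl (by rw [mul_assoc]; exact h.mul_mem_left c _ hc (hST _ (ih hxT)))
    · obtain rfl := h.eq_one x hx hxT
      by_cases hca : c * a = 1
      · exact Or.inr (by rw [mul_one, ← map_mul, hca, map_one])
      · left
        have := h.mul_mem_left (c * a) 1 hca h.one_notMem_left
        simpa using this
  · rintro c x hc hx ⟨-, ih⟩
    have hcx := h.mul_mem_right c x hc hx
    refine ⟨fun _ => ?_, fun hS => (h.notMem_right _ hS hcx).elim⟩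
    have hxa : x * f a ∈ S ∨ x * f a = 1 := by
      by_cases hxS : x ∈ S
      · exact ih hxS
      · obtain rfl := h.eq_one x hxS hx
        simpa using ha
    rw [mul_assoc]
    refine h.mul_mem_right c _ hc ?_
    rcases hxa with hxa | hxa
    · exact h.notMem_right _ hxa
    · exact hxa ▸ h.one_notMem_right

theorem mul_map_mem_right_iff (h : IsFirstLetterPair f g S T) (a : A) (x : G) :
    x * f a ∈ T ↔ x ∈ T := by
  refine ⟨fun hx => ?_, (h.mul_map_mem a x).1⟩
  simpa using (h.mul_map_mem a⁻¹ (x * f a)).1 hx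

/-- The set `T` is almost invariant under right multiplication. -/
theorem finite_setOf_mem_iff (h : IsFirstLetterPair f g S T)
    (htop : f.range ⊔ g.range = ⊤) (x : G) : {y : G | ¬(y ∈ T ↔ y * x ∈ T)}.Finite := by
  have hx : x ∈ Subgroup.closure (Set.range f ∪ Set.range g) := by
    rw [Subgroup.closure_union, ← MonoidHom.coe_range, ← MonoidHom.coe_range,
      Subgroup.closure_eq, Subgroup.closure_eq, htop]
    trivial
  induction hx using Subgroup.closure_induction with
  | mem x hx =>
    rcases hx with ⟨a, rfl⟩ | ⟨b, rfl⟩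
    · simp [h.mul_map_mem_right_iff]
    · refine Set.Finite.subset (Set.toFinite {1, (g b)⁻¹}) fun y hy => ?_
      have h1 := (h.symm.mul_map_mem b y).2
      have h2 := (h.symm.mul_map_mem b⁻¹ (y * g b)).2
      simp only [map_inv, mul_inv_cancel_right] at h2
      rw [Set.mem_insert_iff, Set.mem_singleton_iff, ← mul_eq_one_iff_eq_inv]
      by_contra hcon
      rw [not_or] at hcon
      simp only [Set.mem_ofPred_eq] at hy
      tauto
  | one => simp
  | mul x z _ _ hx hz =>
    refine (hx.union (hz.preimage (mul_left_injective x).injOn)).subset fun y hy => ?_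
    simp only [Set.mem_ofPred_eq, Set.mem_union, Set.mem_preimage, ← mul_assoc] at hy ⊢
    tauto
  | inv x _ hx =>
    refine (hx.preimage (mul_left_injective x⁻¹).injOn).subset fun y hy => ?_
    simp only [Set.mem_ofPred_eq, Set.mem_preimage, inv_mul_cancel_right] at hy ⊢
    tauto

/-- Commutators of one nontrivial element of `B` with infinitely many elements of `A` freely
generate, so no nontrivial word vanishes identically. -/
theorem exists_hom_ne_one [Infinite A] [Nontrivial B] (h : IsFirstLetterPair f g S T)
    {w : FreeGroup ℕ} (hw : w ≠ 1) : ∃ φ : FreeGroup ℕ →* G, φ w ≠ 1 := by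
  obtain ⟨b, hb⟩ := exists_ne (1 : B)
  have : Infinite ({1}ᶜ : Set A) := (Set.finite_singleton 1).infinite_compl.to_subtype
  let e := Infinite.natEmbedding ({1}ᶜ : Set A)
  let a : ULift ℕ → A := fun i => e i.down
  have ha : ∀ i, a i ≠ 1 := fun i => (e i.down).2
  have hinj : Function.Injective a := fun i j hij =>
    ULift.down_injective (e.injective (Subtype.ext hij))
  have hne : ∀ i j, i ≠ j → (a j)⁻¹ * a i ≠ 1 := fun i j hij hh =>
    hij (hinj (inv_mul_eq_one.1 hh).symm)
  let X : ULift ℕ → Set G := fun i => {v | (g b)⁻¹ * (f (a i))⁻¹ * v ∉ T}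
  let Y : ULift ℕ → Set G := fun i => {v | (f (a i))⁻¹ * (g b)⁻¹ * v ∉ S}
  have hXT : ∀ i, ∀ v ∈ X i, (f (a i))⁻¹ * v ∈ T := fun i v hv => by
    simpa [mul_assoc] using h.mul_mem_right b _ hb hv
  have hXS : ∀ i, ∀ v ∈ X i, v ∈ S := fun i v hv => by
    simpa using h.mul_mem_left (a i) _ (ha i) (h.symm.notMem_right _ (hXT i v hv))
  have hYS : ∀ i, ∀ v ∈ Y i, (g b)⁻¹ * v ∈ S := fun i v hv => by
    simpa [mul_assoc] using h.mul_mem_left (a i) _ (ha i) hv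
  have hYT : ∀ i, ∀ v ∈ Y i, v ∈ T := fun i v hv => by
    simpa using h.mul_mem_right b _ hb (h.notMem_right _ (hYS i v hv))
  have hfree := FreeGroup.injective_lift_of_ping_pong
    (fun i => f (a i) * g b * (f (a i))⁻¹ * (g b)⁻¹) X Y
    (fun i => ⟨f (a i) * g b, by simp [X, mul_assoc, h.one_notMem_right]⟩)
    (fun i j hij => Set.disjoint_left.2 fun v hi hj => by
      have h1 := h.mul_mem_left _ _ (hne i j hij) (h.symm.notMem_right _ (hXT i v hi))
      have h2 := hXT j v hj
      refine h.notMem_right _ h1 ?_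
      simpa [mul_assoc] using h2)
    (fun i j hij => Set.disjoint_left.2 fun v hi hj => by
      have h1 := h.mul_mem_left _ _ (hne i j hij) hi
      refine hj ?_
      simpa [mul_assoc] using h1)
    (fun i j => Set.disjoint_left.2 fun v hi hj => h.notMem_right v (hXS i v hi) (hYT j v hj))
    (fun i => by
      rintro _ ⟨v, hv, rfl⟩
      have hv' : (f (a i))⁻¹ * ((g b)⁻¹ * v) ∈ S := by
        simpa [Y, mul_assoc] using hv
      simpa [X, mul_assoc] using h.notMem_right _ hv')
    (fun i => by
      rintro _ ⟨v, hv, rfl⟩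
      have hv' : (g b)⁻¹ * ((f (a i))⁻¹ * v) ∈ T := by
        simpa [X, mul_assoc] using hv
      simpa [Y, mul_assoc] using h.symm.notMem_right _ hv')
  refine ⟨(FreeGroup.lift fun i => f (a i) * g b * (f (a i))⁻¹ * (g b)⁻¹).comp
    (FreeGroup.freeGroupCongr Equiv.ulift.symm).toMonoidHom, fun hφ => hw ?_⟩
  have := (injective_iff_map_eq_one _).1 hfree _ hφ
  exact (FreeGroup.freeGroupCongr Equiv.ulift.symm).map_eq_one_iff.1 this

theorem not_isRational_verbalSet {Q : Type*} [Nontrivial B] [CommGroup Q]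
    (h : IsFirstLetterPair f g S T) (htop : f.range ⊔ g.range = ⊤) (π : G →* Q)
    (hπ : (Set.range (π.comp f)).Infinite) {w : FreeGroup ℕ} (hw1 : w ≠ 1)
    (hw2 : w ∈ commutator (FreeGroup ℕ)) : ¬ IsRational (verbalSet w G) := by
  intro hR
  have hA : Infinite A := by
    by_contra hA
    rw [not_infinite_iff_finite] at hA
    exact hπ (Set.finite_range _)
  have hker : ∀ x ∈ verbalSet w G, π x = 1 := by
    rintro _ ⟨φ, rfl⟩
    exact Abelianization.commutator_subset_ker (π.comp φ) hw2
  obtain ⟨H, ⟨s, rfl⟩, hHk, hH⟩ := hR.exists_fg_le_ker π 1 hker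
  have hconj : ∀ x ∈ verbalSet w G, ∀ y, y * x * y⁻¹ ∈ verbalSet w G := by
    rintro _ ⟨φ, rfl⟩ y
    exact ⟨(MulAut.conj y).toMonoidHom.comp φ, rfl⟩
  have hmem : ∀ x ∈ verbalSet w G, x ∈ Subgroup.closure (s : Set G) := fun x hx => by
    simpa using hH x hx 1 ⟨1, rfl⟩
  obtain ⟨x, hxw, hxT⟩ : ∃ x ∈ verbalSet w G, x ∈ T := by
    obtain ⟨φ, hφ⟩ := h.exists_hom_ne_one hw1
    by_cases hT : φ w ∈ T
    · exact ⟨_, ⟨φ, rfl⟩, hT⟩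
    obtain ⟨b, hb⟩ := exists_ne (1 : B)
    refine ⟨_, hconj _ ⟨φ, rfl⟩ (g b), ?_⟩
    rw [← map_inv]
    rcases (h.symm.mul_map_mem b⁻¹ _).2 (h.mul_mem_right b _ hb hT) with h1 | h1
    · exact h1
    · rw [map_inv, mul_inv_eq_one, mul_eq_left] at h1
      exact (hφ h1).elim
  let D : Set G := ⋃ z ∈ s, {y : G | ¬(y ∈ T ↔ y * z ∈ T)}
  have hD : D.Finite := s.finite_toSet.biUnion fun z _ => h.finite_setOf_mem_iff htop z
  refine hπ ((hD.image fun y => (π y)⁻¹).subset ?_)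
  rintro _ ⟨a, rfl⟩
  by_contra hcon
  have hinv : ∀ k ∈ Subgroup.closure (s : Set G), ∀ z ∈ s,
      ((f a)⁻¹ * k ∈ T ↔ (f a)⁻¹ * k * z ∈ T) := by
    intro k hk z hz
    by_contra hz'
    refine hcon ⟨(f a)⁻¹ * k, Set.mem_biUnion hz hz', ?_⟩
    have : π k = 1 := hHk hk
    simp [this]
  have hall : ∀ k ∈ Subgroup.closure (s : Set G), (f a)⁻¹ * k ∉ T := by
    intro k hk
    induction hk using Subgroup.closure_induction_right with
    | one =>
      rw [mul_one, ← one_mul (f a)⁻¹, ← map_inv, h.mul_map_mem_right_iff]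
      exact h.one_notMem_right
    | mul_right k hk z hz ih => rwa [← mul_assoc, ← hinv k hk z hz]
    | mul_inv_cancel k hk z hz ih =>
      rwa [hinv _ (mul_mem hk (inv_mem (Subgroup.subset_closure hz))) z hz, ← mul_assoc,
        inv_mul_cancel_right]
  refine hall _ (hmem _ (hconj x hxw (f a))) ?_
  rw [← mul_assoc, ← mul_assoc, inv_mul_cancel, one_mul, ← map_inv, h.mul_map_mem_right_iff]
  exact hxT

end IsFirstLetterPair

universe u v

/-- The family `true ↦ A`, `false ↦ B`, lifted to a common universe. -/
def BoolFamily (A : Type u) (B : Type v) : Bool → Type (max u v)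
  | true => ULift.{v} A
  | false => ULift.{u} B

instance BoolFamily.group (A : Type u) (B : Type v) [Group A] [Group B] :
    ∀ i, Group (BoolFamily A B i)
  | true => inferInstanceAs (Group (ULift A))
  | false => inferInstanceAs (Group (ULift B))

/-- The binary free product as an indexed free product. -/
def coprodEquivCoprodI (A : Type u) (B : Type v) [Group A] [Group B] :
    Monoid.Coprod A B ≃* Monoid.CoprodI (BoolFamily A B) :=
  MonoidHom.toMulEquiv
    (Monoid.Coprod.lift
      ((Monoid.CoprodI.of (M := BoolFamily A B) (i := true)).comp
        (MulEquiv.ulift (α := A)).symm.toMonoidHom)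
      ((Monoid.CoprodI.of (M := BoolFamily A B) (i := false)).comp
        (MulEquiv.ulift (α := B)).symm.toMonoidHom))
    (Monoid.CoprodI.lift fun
      | true => Monoid.Coprod.inl.comp (MulEquiv.ulift (α := A)).toMonoidHom
      | false => Monoid.Coprod.inr.comp (MulEquiv.ulift (α := B)).toMonoidHom)
    (by
      ext x
      · simp only [MonoidHom.comp_apply, Monoid.Coprod.lift_apply_inl]
        exact Monoid.CoprodI.lift_of _ _
      · simp only [MonoidHom.comp_apply, Monoid.Coprod.lift_apply_inr]
        exact Monoid.CoprodI.lift_of _ _)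
    (by
      ext i x
      simp only [MonoidHom.comp_apply, Monoid.CoprodI.lift_of]
      cases i
      · exact Monoid.Coprod.lift_apply_inr (M := A) (N := B) _ _ _
      · exact Monoid.Coprod.lift_apply_inl (M := A) (N := B) _ _ _)

theorem coprodEquivCoprodI_inl {A : Type u} {B : Type v} [Group A] [Group B] (a : A) :
    coprodEquivCoprodI A B (Monoid.Coprod.inl a) =
      Monoid.CoprodI.of (M := BoolFamily A B) (i := true) (ULift.up a) := by
  rw [coprodEquivCoprodI, MonoidHom.toMulEquiv_apply, Monoid.Coprod.lift_apply_inl]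
  rfl

theorem coprodEquivCoprodI_inr {A : Type u} {B : Type v} [Group A] [Group B] (b : B) :
    coprodEquivCoprodI A B (Monoid.Coprod.inr b) =
      Monoid.CoprodI.of (M := BoolFamily A B) (i := false) (ULift.up b) := by
  rw [coprodEquivCoprodI, MonoidHom.toMulEquiv_apply, Monoid.Coprod.lift_apply_inr]
  rfl

open Classical in
/-- The index of the first letter of the reduced word of an element of a free product. -/
noncomputable def fstIdx {ι : Type*} {M : ι → Type*} [∀ i, Group (M i)] (x : Monoid.CoprodI M) :
    Option ι :=
  (Monoid.CoprodI.Word.equiv x).fstIdx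

theorem fstIdx_one {ι : Type*} {M : ι → Type*} [∀ i, Group (M i)] :
    fstIdx (1 : Monoid.CoprodI M) = none := by
  classical
  simp [fstIdx, Monoid.CoprodI.Word.equiv, Monoid.CoprodI.Word.fstIdx]

theorem fstIdx_eq_none {ι : Type*} {M : ι → Type*} [∀ i, Group (M i)] {x : Monoid.CoprodI M}
    (hx : fstIdx x = none) : x = 1 := by
  classical
  obtain ⟨w, rfl⟩ := Monoid.CoprodI.Word.equiv.symm.surjective x
  cases w using Monoid.CoprodI.Word.consRecOn with
  | empty => rfl
  | cons i m w h1 h2 => simp [fstIdx] at hx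

theorem fstIdx_of_mul {ι : Type*} {M : ι → Type*} [∀ i, Group (M i)] {i : ι} {m : M i}
    (hm : m ≠ 1) {x : Monoid.CoprodI M} (hx : fstIdx x ≠ some i) :
    fstIdx (Monoid.CoprodI.of m * x) = some i := by
  classical
  have hx' : (Monoid.CoprodI.Word.equiv x).fstIdx ≠ some i := by
    unfold fstIdx at hx
    convert hx
  have : Monoid.CoprodI.Word.equiv (Monoid.CoprodI.of m * x) =
      Monoid.CoprodI.Word.cons m (Monoid.CoprodI.Word.equiv x) hx' hm := by
    rw [Monoid.CoprodI.Word.cons_eq_smul]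
    exact mul_smul (Monoid.CoprodI.of m) x (Monoid.CoprodI.Word.empty : Monoid.CoprodI.Word M)
  unfold fstIdx
  convert Monoid.CoprodI.Word.fstIdx_cons m (Monoid.CoprodI.Word.equiv x) hx' hm

theorem coprodI_reduced_induction {ι : Type*} {M : ι → Type*} [∀ i, Group (M i)]
    {C : Monoid.CoprodI M → Prop} (one : C 1)
    (mul : ∀ i (m : M i) x, m ≠ 1 → fstIdx x ≠ some i → C x → C (Monoid.CoprodI.of m * x))
    (x : Monoid.CoprodI M) : C x := by
  classical
  obtain ⟨w, rfl⟩ := Monoid.CoprodI.Word.equiv.symm.surjective x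
  induction w using Monoid.CoprodI.Word.consRecOn with
  | empty => exact one
  | cons i m w h1 h2 ih =>
    change C (Monoid.CoprodI.Word.prod _)
    rw [Monoid.CoprodI.Word.prod_cons]
    refine mul i m _ h2 ?_ ih
    unfold fstIdx
    convert h1
    exact Monoid.CoprodI.Word.equiv.apply_symm_apply w

theorem isFirstLetterPair_coprod (A : Type u) (B : Type v) [Group A] [Group B] :
    IsFirstLetterPair (Monoid.Coprod.inl : A →* Monoid.Coprod A B) Monoid.Coprod.inr
      {x | fstIdx (coprodEquivCoprodI A B x) = some true}
      {x | fstIdx (coprodEquivCoprodI A B x) = some false} where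
  one_notMem_left := by simp [fstIdx_one]
  one_notMem_right := by simp [fstIdx_one]
  notMem_right x hx := by simp_all
  eq_one x hx hx' := by
    rw [← (coprodEquivCoprodI A B).map_eq_one_iff]
    apply fstIdx_eq_none
    match h : fstIdx (coprodEquivCoprodI A B x) with
    | none => rfl
    | some true => exact (hx h).elim
    | some false => exact (hx' h).elim
  mul_mem_left a x ha hx := by
    rw [Set.mem_ofPred_eq, map_mul, coprodEquivCoprodI_inl]
    exact fstIdx_of_mul (fun h => ha (congrArg ULift.down h)) hx
  mul_mem_right b x hb hx := by
    rw [Set.mem_ofPred_eq, map_mul, coprodEquivCoprodI_inr]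
    exact fstIdx_of_mul (fun h => hb (congrArg ULift.down h)) hx
  induction C one left right x := by
    obtain ⟨x, rfl⟩ := (coprodEquivCoprodI A B).symm.surjective x
    refine coprodI_reduced_induction (C := fun x => C ((coprodEquivCoprodI A B).symm x))
      (by simpa using one) ?_ x
    rintro (_ | _) m x hm hx ih
    · have := right m.down ((coprodEquivCoprodI A B).symm x)
        (fun h => hm (congrArg ULift.up h)) (by simpa using hx) ih
      convert this using 1
      rw [MulEquiv.symm_apply_eq, map_mul, coprodEquivCoprodI_inr, MulEquiv.apply_symm_apply]
      rfl
    · have := left m.down ((coprodEquivCoprodI A B).symm x)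
        (fun h => hm (congrArg ULift.up h)) (by simpa using hx) ih
      convert this using 1
      rw [MulEquiv.symm_apply_eq, map_mul, coprodEquivCoprodI_inl, MulEquiv.apply_symm_apply]
      rfl

/-- If `G = A ∗ B` is a free product of nontrivial groups with infinite abelianization,
then for any nontrivial commutator word `w` the set `w[G]` is not rational in `G`. -/
theorem stmt_12 {A B : Type*} [Group A] [Group B] [Nontrivial A] [Nontrivial B]
    (hab : Infinite (Abelianization (Monoid.Coprod A B)))
    (w : FreeGroup ℕ) (hw1 : w ≠ 1) (hw2 : w ∈ commutator (FreeGroup ℕ)) :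
    ¬ IsRational (verbalSet w (Monoid.Coprod A B)) := by
  have h := isFirstLetterPair_coprod A B
  let π : Monoid.Coprod A B →* Abelianization (Monoid.Coprod A B) := Abelianization.of
  by_cases hA : (Set.range (π.comp Monoid.Coprod.inl)).Finite
  · by_cases hB : (Set.range (π.comp Monoid.Coprod.inr)).Finite
    · refine (Set.infinite_univ_iff.2 hab ((hA.mul hB).subset fun y _ => ?_)).elim
      obtain ⟨x, rfl⟩ := QuotientGroup.mk_surjective y
      induction x using Monoid.Coprod.induction_on with
      | inl a => exact ⟨_, ⟨a, rfl⟩, _, ⟨1, rfl⟩, by simp [π]; rfl⟩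
      | inr b => exact ⟨_, ⟨1, rfl⟩, _, ⟨b, rfl⟩, by simp [π]; rfl⟩
      | mul x y hx hy =>
        obtain ⟨_, ⟨a, rfl⟩, _, ⟨b, rfl⟩, hx⟩ := hx trivial
        obtain ⟨_, ⟨c, rfl⟩, _, ⟨d, rfl⟩, hy⟩ := hy trivial
        refine ⟨_, ⟨a * c, rfl⟩, _, ⟨b * d, rfl⟩, ?_⟩
        rw [QuotientGroup.mk_mul, ← hx, ← hy]
        simp only [map_mul]
        exact mul_mul_mul_comm _ _ _ _
    · exact h.symm.not_isRational_verbalSet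
        (by rw [sup_comm]; exact Monoid.Coprod.range_inl_sup_range_inr) π hB hw1 hw2
  · exact h.not_isRational_verbalSet Monoid.Coprod.range_inl_sup_range_inr π hA hw1 hw2
end

section
/- Let F be a free non-abelian group. For any nontrivial commutator word w (i.e., 1 ≠ w ∈ [F(X),F(X)]), the verbal set w[F] is not a rational subset of F. -/
open Pointwise

/-- A rational subset `R` of a group contains a finite subset `R₀` such that every left coset
containing `R₀` contains `R`. -/
theorem IsRational.exists_finite_coset_test {G : Type*} [Group G] {R : Set G}
    (hR : IsRational R) :
    ∃ R₀ : Set G, R₀.Finite ∧ R₀ ⊆ R ∧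
      ∀ (H : Subgroup G) (g : G), (∀ r ∈ R₀, g * r ∈ H) → ∀ r ∈ R, g * r ∈ H := by
  induction hR with
  | finite s h => exact ⟨s, h, subset_rfl, fun _ _ h => h⟩
  | @union s t _ _ ihs iht =>
    obtain ⟨s₀, hs, hs', hs''⟩ := ihs
    obtain ⟨t₀, ht, ht', ht''⟩ := iht
    refine ⟨s₀ ∪ t₀, hs.union ht, Set.union_subset_union hs' ht', fun H g h r hr => ?_⟩
    rcases hr with hr | hr
    · exact hs'' H g (fun r hr => h r (Or.inl hr)) r hr
    · exact ht'' H g (fun r hr => h r (Or.inr hr)) r hr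
  | @mul s t _ _ ihs iht =>
    obtain ⟨s₀, hs, hs', hs''⟩ := ihs
    obtain ⟨t₀, ht, ht', ht''⟩ := iht
    refine ⟨s₀ * t₀, hs.mul ht, Set.mul_subset_mul hs' ht', fun H g h r hr => ?_⟩
    obtain ⟨a, ha, b, hb, rfl⟩ := hr
    have key : ∀ c ∈ t₀, g * a * c ∈ H := fun c hc => by
      have := hs'' (H.comap (MulAut.conj c⁻¹).toMonoidHom) (c * g) (fun r hr => by
        simpa [mul_assoc] using h (r * c) (Set.mul_mem_mul hr hc)) a ha
      simpa [mul_assoc] using this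
    simpa [mul_assoc] using ht'' H (g * a) key b hb
  | @star s _ ihs =>
    obtain ⟨s₀, hs, hs', hs''⟩ := ihs
    refine ⟨insert 1 s₀, hs.insert 1, Set.insert_subset (one_mem _)
      (hs'.trans Submonoid.subset_closure), fun H g h r hr => ?_⟩
    have hg : g ∈ H := by simpa using h 1 (Set.mem_insert _ _)
    have hsH : ∀ r ∈ s, r ∈ H := fun r hr => by
      simpa using hs'' H 1 (fun r hr => by
        simpa using (H.mul_mem_cancel_left hg).1 (h r (Set.mem_insert_of_mem _ hr))) r hr
    have : Submonoid.closure s ≤ H.toSubmonoid := Submonoid.closure_le.2 hsH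
    exact H.mul_mem hg (this hr)

/-- The action of `ℤ` on `FreeGroup ℤ` shifting the generators. -/
def freeGroupShift : Multiplicative ℤ →* MulAut (FreeGroup ℤ) where
  toFun n := FreeGroup.freeGroupCongr (Equiv.addRight n.toAdd)
  map_one' := by
    ext g
    induction g using FreeGroup.induction_on <;> simp_all
  map_mul' a b := by
    ext g
    induction g using FreeGroup.induction_on <;> simp_all [add_left_comm, add_comm]

theorem freeGroupShift_of (n : Multiplicative ℤ) (i : ℤ) :
    freeGroupShift n (FreeGroup.of i) = FreeGroup.of (i + n.toAdd) := by
  simp [freeGroupShift]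

/-- The endomorphism of `FreeGroup ℤ` killing the generators below `m`. -/
def freeGroupKill (m : ℤ) : FreeGroup ℤ →* FreeGroup ℤ :=
  FreeGroup.lift fun i => if i < m then 1 else FreeGroup.of i

theorem eventually_freeGroupKill_eq_one (g : FreeGroup ℤ) :
    ∀ᶠ m in Filter.atTop, freeGroupKill m g = 1 := by
  induction g using FreeGroup.induction_on with
  | C1 => simp
  | of i =>
    filter_upwards [Filter.eventually_gt_atTop i] with m hm
    simp [freeGroupKill, hm]
  | inv_of i ih =>
    filter_upwards [ih] with m hm
    simp [hm]
  | mul a b ha hb =>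
    filter_upwards [ha, hb] with m ha hb
    simp [ha, hb]

open Classical in
/-- The map from a free group to `FreeGroup ℤ ⋊ ℤ` sending `y` to the shift, `x` to the zeroth
generator, and all other generators to the identity. -/
noncomputable def freeGroupToShift {X : Type*} (x y : X) :
    FreeGroup X →* FreeGroup ℤ ⋊[freeGroupShift] Multiplicative ℤ :=
  FreeGroup.lift fun z =>
    if z = y then SemidirectProduct.inr (Multiplicative.ofAdd 1)
    else if z = x then SemidirectProduct.inl (FreeGroup.of 0) else 1

theorem freeGroupToShift_conj {X : Type*} {x y : X} (hxy : x ≠ y) (n : ℤ) :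
    freeGroupToShift x y (FreeGroup.of y ^ n * FreeGroup.of x * (FreeGroup.of y ^ n)⁻¹) =
      SemidirectProduct.inl (FreeGroup.of n) := by
  simp only [freeGroupToShift, map_mul, map_inv, map_zpow, FreeGroup.lift_apply_of, if_true, hxy,
    if_false]
  rw [← map_zpow, ← map_inv, ← SemidirectProduct.inl_aut, freeGroupShift_of]
  simp

theorem map_eq_one_of_mem_commutator {G A : Type*} [Group G] [CommGroup A] (f : G →* A) {g : G}
    (hg : g ∈ commutator G) : f g = 1 :=
  Abelianization.commutator_subset_ker f hg

/-- In a free non-abelian group `F`, for any nontrivial commutator word `w`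
the verbal set `w[F]` is not rational. -/
theorem stmt_13 {X : Type*} (x y : X) (hxy : x ≠ y)
    (w : FreeGroup ℕ) (hw1 : w ≠ 1) (hw2 : w ∈ commutator (FreeGroup ℕ)) :
    ¬ IsRational (verbalSet w (FreeGroup X)) := by
  intro hR
  obtain ⟨R₀, hfin, hsub, htest⟩ := hR.exists_finite_coset_test
  obtain ⟨m, hm⟩ := ((Filter.eventually_all_finite hfin).2 fun r _ =>
    eventually_freeGroupKill_eq_one (freeGroupToShift x y r).left).exists
  let H : Subgroup (FreeGroup X) :=
    ((freeGroupKill m).ker.map SemidirectProduct.inl).comap (freeGroupToShift x y)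
  have hR₀ : ∀ r ∈ R₀, 1 * r ∈ H := fun r hr => by
    obtain ⟨φ, rfl⟩ := hsub hr
    have hright := map_eq_one_of_mem_commutator
      ((SemidirectProduct.rightHom.comp (freeGroupToShift x y)).comp φ) hw2
    rw [one_mul]
    exact ⟨_, hm _ hr, SemidirectProduct.ext (by simp) (by simpa using hright.symm)⟩
  let e : ℕ → ℤ := fun i => i + m
  have he : Function.Injective e := fun i j h => by simpa [e] using h
  let φ : FreeGroup ℕ →* FreeGroup X := FreeGroup.lift fun i =>
    FreeGroup.of y ^ e i * FreeGroup.of x * (FreeGroup.of y ^ e i)⁻¹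
  have hφ : (freeGroupToShift x y).comp φ = SemidirectProduct.inl.comp (FreeGroup.map e) := by
    ext1 i
    simp only [MonoidHom.comp_apply, φ, FreeGroup.lift_apply_of, FreeGroup.map.of]
    exact freeGroupToShift_conj hxy _
  obtain ⟨u, hu, huw⟩ := htest H 1 hR₀ (φ w) ⟨φ, rfl⟩
  rw [one_mul, ← MonoidHom.comp_apply, hφ, MonoidHom.comp_apply] at huw
  obtain rfl := SemidirectProduct.inl_injective huw
  have hk : (freeGroupKill m).comp (FreeGroup.map e) = FreeGroup.map e := by
    ext1 i
    simp [freeGroupKill, e]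
  have h1 : FreeGroup.map e w = 1 := by
    rw [← hk]
    exact hu
  exact hw1 (FreeGroup.map_injective he (h1.trans (map_one _).symm))
end

section
/- If a group H admits a surjective homomorphism onto a free non-abelian group, then for every proper word w the verbal set w[H] is not rational in H. -/
open Pointwise

theorem IsRational.image {M N : Type*} [Monoid M] [Monoid N] (f : M →* N) {s : Set M}
    (h : IsRational s) : IsRational (f '' s) := by
  induction h with
  | finite s h => exact .finite _ (h.image f)
  | union _ _ ihs iht => rw [Set.image_union]; exact ihs.union iht
  | mul _ _ ihs iht => rw [Set.image_mul]; exact ihs.mul iht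
  | star _ ih =>
    rw [← Submonoid.coe_map, MonoidHom.map_mclosure]
    exact ih.star

theorem image_verbalSet {G K : Type*} [Group G] [Group K] (f : G →* K)
    (hf : Function.Surjective f) (w : FreeGroup ℕ) : f '' verbalSet w G = verbalSet w K := by
  ext k
  constructor
  · rintro ⟨_, ⟨ψ, rfl⟩, rfl⟩
    exact ⟨f.comp ψ, rfl⟩
  · rintro ⟨ψ, rfl⟩
    choose g hg using hf
    refine ⟨_, ⟨FreeGroup.lift fun i => g (ψ (.of i)), rfl⟩, ?_⟩
    rw [← MonoidHom.comp_apply]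
    congr 1
    ext i
    simp [hg]

namespace Language

open scoped Computability

variable {α : Type*} {L M : Language α}

theorem IsRegular.of_finite (h : Set.Finite (L : Set (List α))) : L.IsRegular := by
  rw [isRegular_iff_finite_range_leftQuotient]
  have hfin : Set.Finite {y : List α | ∃ l ∈ L, y <:+ l} := by
    refine (h.biUnion fun l _ => l.tails.finite_toSet).subset ?_
    rintro y ⟨l, hl, hy⟩
    exact Set.mem_biUnion hl (by simpa using hy)
  refine hfin.finite_subsets.subset ?_
  rintro _ ⟨x, rfl⟩ y hy
  exact ⟨_, hy, List.suffix_append _ _⟩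

theorem leftQuotient_mul (x : List α) : (L * M).leftQuotient x =
    L.leftQuotient x * M + sSup {N | ∃ u ∈ L, ∃ v, u ++ v = x ∧ M.leftQuotient v = N} := by
  ext y
  simp only [mem_leftQuotient, mem_add, mem_mul]
  constructor
  · rintro ⟨a, ha, b, hb, h⟩
    rcases List.append_eq_append_iff.1 h with ⟨c, rfl, rfl⟩ | ⟨c, rfl, rfl⟩
    · exact .inr ⟨_, ⟨a, ha, c, rfl, rfl⟩, hb⟩
    · exact .inl ⟨c, ha, b, hb, rfl⟩
  · rintro (⟨a, ha, b, hb, rfl⟩ | ⟨_, ⟨u, hu, v, rfl, rfl⟩, hy⟩)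
    · exact ⟨_, ha, b, hb, by simp⟩
    · exact ⟨u, hu, _, hy, by simp⟩

protected theorem IsRegular.mul (hL : L.IsRegular) (hM : M.IsRegular) : (L * M).IsRegular := by
  rw [isRegular_iff_finite_range_leftQuotient] at *
  refine (hL.image2 (fun A B => A * M + sSup B) hM.finite_subsets).subset ?_
  rintro _ ⟨x, rfl⟩
  refine ⟨_, ⟨x, rfl⟩, _, ?_, (leftQuotient_mul x).symm⟩
  rintro _ ⟨_, _, v, _, rfl⟩
  exact ⟨v, rfl⟩

theorem leftQuotient_kstar {x : List α} (hx : x ≠ []) : L∗.leftQuotient x =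
    sSup {N | ∃ u ∈ L∗, ∃ v, u ++ v = x ∧ L.leftQuotient v = N} * L∗ := by
  ext y
  simp only [mem_leftQuotient, mem_mul]
  constructor
  · rw [mem_kstar]
    rintro ⟨S, hS, hSL⟩
    induction S generalizing x with
    | nil => simp_all
    | cons s S ih =>
      have hS' : S.flatten ∈ L∗ := ⟨S, rfl, fun z hz => hSL z (by simp [hz])⟩
      have hs : s ∈ L := hSL s (by simp)
      rw [List.flatten_cons] at hS
      rcases List.append_eq_append_iff.1 hS with ⟨c, rfl, rfl⟩ | ⟨c, rfl, hc⟩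
      · exact ⟨c, ⟨_, ⟨[], nil_mem_kstar _, x, rfl, rfl⟩, hs⟩, _, hS', rfl⟩
      · rcases eq_or_ne c [] with rfl | hc0
        · exact ⟨[], ⟨_, ⟨[], nil_mem_kstar _, s, by simp, rfl⟩,
            (by rwa [List.append_nil] : s ++ [] ∈ L)⟩, _, hS', by simpa using hc⟩
        · obtain ⟨a, ⟨_, ⟨u, hu, v, rfl, rfl⟩, ha⟩, b, hb, rfl⟩ :=
            ih hc0 hc.symm fun z hz => hSL z (by simp [hz])
          refine ⟨a, ⟨_, ⟨s ++ u, ?_, v, by simp, rfl⟩, ha⟩, b, hb, rfl⟩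
          obtain ⟨T, rfl, hT⟩ := mem_kstar.1 hu
          exact ⟨s :: T, rfl, by simpa [hs] using hT⟩
  · rintro ⟨a, ⟨_, ⟨u, hu, v, rfl, rfl⟩, ha⟩, b, hb, rfl⟩
    rw [mem_kstar] at *
    obtain ⟨S, rfl, hS⟩ := hu
    obtain ⟨T, rfl, hT⟩ := hb
    refine ⟨S ++ (v ++ a) :: T, by simp, ?_⟩
    intro z hz
    simp only [List.mem_append, List.mem_cons] at hz
    rcases hz with hz | rfl | hz
    exacts [hS z hz, ha, hT z hz]

protected theorem IsRegular.kstar (hL : L.IsRegular) : L∗.IsRegular := by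
  rw [isRegular_iff_finite_range_leftQuotient] at *
  refine ((hL.finite_subsets.image fun B => sSup B * L∗).insert L∗).subset ?_
  rintro _ ⟨x, rfl⟩
  rcases eq_or_ne x [] with rfl | hx
  · exact .inl rfl
  · refine .inr ⟨_, ?_, (leftQuotient_kstar hx).symm⟩
    rintro _ ⟨_, _, v, _, rfl⟩
    exact ⟨v, rfl⟩

end Language

open scoped Computability in
/-- A rational subset of a free group is the image of a regular language of words. -/
theorem IsRational.exists_isRegular {α : Type*} [DecidableEq α] {s : Set (FreeGroup α)}
    (h : IsRational s) : ∃ L : Language (α × Bool), L.IsRegular ∧ FreeGroup.mk '' L = s := by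
  induction h with
  | finite s h =>
    refine ⟨(FreeGroup.toWord '' s : Set _), .of_finite (h.image _), ?_⟩
    simp only [Set.image_image, FreeGroup.mk_toWord, Set.image_id']
  | union _ _ ihs iht =>
    obtain ⟨L, hL, rfl⟩ := ihs
    obtain ⟨M, hM, rfl⟩ := iht
    exact ⟨L + M, hL.add hM, Set.image_union ..⟩
  | mul _ _ ihs iht =>
    obtain ⟨L, hL, rfl⟩ := ihs
    obtain ⟨M, hM, rfl⟩ := iht
    exact ⟨L * M, hL.mul hM, Set.image_image2_distrib fun _ _ => FreeGroup.mul_mk.symm⟩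
  | star _ ih =>
    obtain ⟨L, hL, rfl⟩ := ih
    refine ⟨L∗, hL.kstar, Set.Subset.antisymm ?_ ?_⟩
    · rintro _ ⟨_, ⟨S, rfl, hS⟩, rfl⟩
      induction S with
      | nil => exact one_mem _
      | cons a S ih =>
        rw [List.flatten_cons, ← FreeGroup.mul_mk]
        exact mul_mem (Submonoid.subset_closure ⟨a, hS a (by simp), rfl⟩)
          (ih fun z hz => hS z (by simp [hz]))
    · intro g hg
      induction hg using Submonoid.closure_induction with
      | mem _ hx =>
        obtain ⟨l, hl, rfl⟩ := hx
        exact ⟨l, ⟨[l], by simp, fun z hz => List.mem_singleton.1 hz ▸ hl⟩, rfl⟩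
      | one => exact ⟨[], Language.nil_mem_kstar _, rfl⟩
      | mul _ _ _ _ hx hy =>
        obtain ⟨_, ⟨S, rfl, hS⟩, rfl⟩ := hx
        obtain ⟨_, ⟨T, rfl, hT⟩, rfl⟩ := hy
        refine ⟨_, ⟨S ++ T, rfl, fun z hz => ?_⟩, by simp [FreeGroup.mul_mk]⟩
        rcases List.mem_append.1 hz with hz | hz
        exacts [hS z hz, hT z hz]

namespace DFA

variable {α σ : Type*}

/-- Some word freely reducing to `A` leads from the state `q` to the state `r`. -/
def FreeReaches (M : DFA (α × Bool) σ) (q : σ) (A : List (α × Bool)) (r : σ) : Prop :=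
  ∃ l, FreeGroup.Red l A ∧ M.evalFrom q l = r

variable {M : DFA (α × Bool) σ}

theorem freeReaches_append {q r : σ} {A B : List (α × Bool)} :
    M.FreeReaches q (A ++ B) r ↔ ∃ s, M.FreeReaches q A s ∧ M.FreeReaches s B r := by
  constructor
  · rintro ⟨l, hl, rfl⟩
    obtain ⟨l₁, l₂, rfl, h₁, h₂⟩ := FreeGroup.Red.to_append_iff.1 hl
    exact ⟨_, ⟨l₁, h₁, rfl⟩, l₂, h₂, (M.evalFrom_of_append ..).symm⟩
  · rintro ⟨_, ⟨l₁, h₁, rfl⟩, l₂, h₂, rfl⟩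
    exact ⟨l₁ ++ l₂, FreeGroup.Red.append_append h₁ h₂, M.evalFrom_of_append ..⟩

theorem exists_trace {a : α × Bool} {n : ℕ} {q r : σ}
    (h : M.FreeReaches q (List.replicate n a) r) :
    ∃ s : ℕ → σ, ∀ i j, i ≤ j → j ≤ n →
      M.FreeReaches q (List.replicate i a) (s i) ∧
      M.FreeReaches (s i) (List.replicate (j - i) a) (s j) ∧
      M.FreeReaches (s j) (List.replicate (n - j) a) r := by
  induction n generalizing r with
  | zero =>
    have hnil : ∀ t, M.FreeReaches t [] t := fun t => ⟨[], .refl, rfl⟩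
    by_cases hqr : q = r
    · subst hqr
      refine ⟨fun _ => q, fun i j hij hj => ?_⟩
      obtain rfl : j = 0 := by omega
      obtain rfl : i = 0 := by omega
      simp [hnil]
    · refine ⟨fun _ => r, fun i j hij hj => ?_⟩
      obtain rfl : j = 0 := by omega
      obtain rfl : i = 0 := by omega
      exact ⟨h, hnil _, hnil _⟩
  | succ n ih =>
    rw [List.replicate_succ', freeReaches_append] at h
    obtain ⟨t, ht, htr⟩ := h
    obtain ⟨s, hs⟩ := ih ht
    refine ⟨fun i => if i ≤ n then s i else r, fun i j hij hj => ?_⟩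
    have hnil : ∀ t, M.FreeReaches t [] t := fun t => ⟨[], .refl, rfl⟩
    rcases hj.lt_or_eq with hj | rfl
    · obtain ⟨h₁, h₂, h₃⟩ := hs i j hij (by omega)
      simp only [if_pos (by omega : i ≤ n), if_pos (by omega : j ≤ n)]
      refine ⟨h₁, h₂, ?_⟩
      rw [Nat.succ_sub (by omega), List.replicate_succ', freeReaches_append]
      exact ⟨t, h₃, htr⟩
    · simp only [if_neg (by omega : ¬ n + 1 ≤ n)]
      rcases hij.lt_or_eq with hi | rfl
      · obtain ⟨h₁, -, h₃⟩ := hs i i le_rfl (by omega)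
        simp only [if_pos (by omega : i ≤ n)]
        rw [Nat.succ_sub (by omega), List.replicate_succ', freeReaches_append, Nat.sub_self]
        exact ⟨h₁, ⟨t, h₃, htr⟩, hnil r⟩
      · simp only [if_neg (by omega : ¬ n + 1 ≤ n)]
        rw [Nat.sub_self, List.replicate_succ', freeReaches_append]
        exact ⟨⟨t, ht, htr⟩, hnil r, hnil r⟩

theorem FreeReaches.replicate_mul {a : α × Bool} {n : ℕ} {q : σ}
    (h : M.FreeReaches q (List.replicate n a) q) (k : ℕ) :
    M.FreeReaches q (List.replicate (n * k) a) q := by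
  induction k with
  | zero => exact ⟨[], .refl, rfl⟩
  | succ k ih =>
    rw [Nat.mul_succ, ← List.replicate_append_replicate, freeReaches_append]
    exact ⟨q, ih, h⟩

open scoped Nat in
theorem FreeReaches.pump [Fintype σ] {a : α × Bool} {q r : σ}
    (h : M.FreeReaches q (List.replicate (Fintype.card σ) a) r) (k : ℕ) :
    M.FreeReaches q (List.replicate (Fintype.card σ + (Fintype.card σ)! * k) a) r := by
  obtain ⟨s, hs⟩ := exists_trace h
  set n := Fintype.card σ with hn
  obtain ⟨i, j, hij, hsij⟩ : ∃ i j : Fin (n + 1), i < j ∧ s i = s j := by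
    obtain ⟨i, j, hne, h⟩ := Fintype.exists_ne_map_eq_of_card_lt
      (fun i : Fin (n + 1) => s i) (by simp [hn])
    rcases hne.lt_or_gt with hlt | hlt
    exacts [⟨i, j, hlt, h⟩, ⟨j, i, hlt, h.symm⟩]
  have hij' : (i : ℕ) < j := hij
  obtain ⟨h₁, h₂, h₃⟩ := hs i j hij'.le (by omega)
  obtain ⟨-, -, h₄⟩ := hs i i le_rfl (by omega)
  rw [← hsij] at h₂
  obtain ⟨c, hc⟩ : (j - i : ℕ) ∣ n ! := Nat.dvd_factorial (by omega) (by omega)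
  have h₅ := h₂.replicate_mul (c * k)
  rw [← mul_assoc, ← hc] at h₅
  have : n + n ! * k = i + n ! * k + (n - i) := by omega
  rw [this, ← List.replicate_append_replicate, ← List.replicate_append_replicate,
    freeReaches_append]
  exact ⟨_, freeReaches_append.2 ⟨_, h₁, h₅⟩, h₄⟩

theorem exists_freeReaches [DecidableEq α] {W : List (α × Bool)} (hW : FreeGroup.IsReduced W)
    (h : FreeGroup.mk W ∈ FreeGroup.mk '' (M.accepts : Set (List (α × Bool)))) :
    ∃ r ∈ M.accept, M.FreeReaches M.start W r := by
  obtain ⟨l, hl, hlW⟩ := h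
  refine ⟨_, hl, l, ?_, rfl⟩
  rw [← hW.reduce_eq, ← FreeGroup.reduce.sound hlW]
  exact FreeGroup.reduce.red

theorem FreeReaches.mk_mem {W : List (α × Bool)} {r : σ} (hr : r ∈ M.accept)
    (h : M.FreeReaches M.start W r) :
    FreeGroup.mk W ∈ FreeGroup.mk '' (M.accepts : Set (List (α × Bool))) := by
  obtain ⟨l, hl, rfl⟩ := h
  exact ⟨l, hr, FreeGroup.Red.exact.2 ⟨W, hl, .refl⟩⟩

end DFA

section ExponentSums

variable (w : FreeGroup ℕ)

theorem eWord_dvd_expSum (i : ℕ) : (eWord w : ℤ) ∣ expSum w i := by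
  by_cases hi : i ∈ (expSum w).support
  · exact Int.natCast_dvd.2 (Finset.gcd_dvd hi)
  · simp [Finsupp.notMem_support_iff.1 hi]

theorem toAdd_apply_eq_sum_expSum {A : Type*} [AddCommGroup A]
    (E : FreeGroup ℕ →* Multiplicative A) :
    (E w).toAdd = (expSum w).sum fun i n => n • (E (.of i)).toAdd := by
  have key : E = (AddMonoidHom.toMultiplicative (Finsupp.liftAddHom fun i =>
      (zmultiplesHom A) (E (.of i)).toAdd : (ℕ →₀ ℤ) →+ A)).comp
      (FreeGroup.lift fun i => Multiplicative.ofAdd (Finsupp.single i (1 : ℤ))) := by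
    ext i
    simp
  exact congrArg Multiplicative.toAdd (DFunLike.congr_fun key w)

theorem eq_one_of_eWord_nsmul_eq_zero {A : Type*} [AddCommGroup A]
    (hA : ∀ a : A, eWord w • a = 0) (E : FreeGroup ℕ →* Multiplicative A) : E w = 1 := by
  rw [← toAdd_eq_zero, toAdd_apply_eq_sum_expSum]
  refine Finset.sum_eq_zero fun i _ => ?_
  obtain ⟨c, hc⟩ := eWord_dvd_expSum w i
  simp only [hc]
  rw [mul_comm, mul_smul, natCast_zsmul, hA, smul_zero]

theorem pow_eWord_mem_verbalSet {G : Type*} [Group G] (g : G) :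
    g ^ eWord w ∈ verbalSet w G := by
  obtain ⟨c, hc⟩ := Finset.gcd_eq_sum_mul (expSum w).support (expSum w)
  have habs : (eWord w : ℤ) = (expSum w).support.gcd (expSum w) := by
    refine Int.dvd_antisymm (Int.natCast_nonneg _) Finset.Int.finsetGcd_nonneg
      (Finset.dvd_gcd fun i _ => eWord_dvd_expSum w i) ?_
    exact Int.dvd_natCast.2 (Finset.dvd_gcd fun i hi =>
      Int.natAbs_dvd_natAbs.2 (Finset.gcd_dvd hi))
  refine ⟨(zpowersHom G g).comp (FreeGroup.lift fun i => Multiplicative.ofAdd (c i)), ?_⟩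
  have h := toAdd_apply_eq_sum_expSum w (FreeGroup.lift fun i => Multiplicative.ofAdd (c i))
  simp only [FreeGroup.lift_apply_of, toAdd_ofAdd, smul_eq_mul] at h
  rw [MonoidHom.comp_apply, zpowersHom_apply, h, Finsupp.sum, ← hc, ← habs, zpow_natCast]

variable {w}

theorem IsProperWord.ne_one (hw : IsProperWord w) : w ≠ 1 := by
  rintro rfl
  obtain ⟨G, _, H, _, h, -⟩ := hw
  refine h (Set.eq_singleton_iff_unique_mem.2 ⟨⟨1, rfl⟩, ?_⟩)
  rintro _ ⟨ψ, rfl⟩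
  exact map_one ψ

theorem IsProperWord.eWord_ne_one (hw : IsProperWord w) : eWord w ≠ 1 := by
  intro he
  obtain ⟨G, _, H, _, -, h⟩ := hw
  refine h (Set.eq_univ_of_forall fun g => ?_)
  simpa [he] using pow_eWord_mem_verbalSet w g

end ExponentSums

/-- The shift action of `ℤ` on the free group of rank `ℤ`. -/
def FreeGroup.shift : Multiplicative ℤ →* MulAut (FreeGroup ℤ) where
  toFun n := FreeGroup.freeGroupCongr (Equiv.addRight n.toAdd)
  map_one' := by
    rw [MulAut.one_def, ← FreeGroup.freeGroupCongr_refl]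
    congr 1
    ext i
    simp
  map_mul' a b := by
    rw [MulAut.mul_def, FreeGroup.freeGroupCongr_trans]
    congr 1
    ext i
    simp [add_comm, add_left_comm]

/-- A nontrivial word of any countable rank takes a nontrivial value in the free group of
rank two. -/
theorem exists_apply_ne_one {w : FreeGroup ℕ} (hw : w ≠ 1) :
    ∃ ψ : FreeGroup ℕ →* FreeGroup Bool, ψ w ≠ 1 := by
  let t : FreeGroup ℤ ⋊[FreeGroup.shift] Multiplicative ℤ :=
    SemidirectProduct.inr (Multiplicative.ofAdd 1)
  let ρ : FreeGroup Bool →* FreeGroup ℤ ⋊[FreeGroup.shift] Multiplicative ℤ :=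
    FreeGroup.lift fun b => bif b then SemidirectProduct.inl (.of 0) else t
  let ψ : FreeGroup ℕ →* FreeGroup Bool :=
    FreeGroup.lift fun i => .of false ^ i * .of true * (.of false ^ i)⁻¹
  have hcomp : ρ.comp ψ = SemidirectProduct.inl.comp (FreeGroup.map ((↑) : ℕ → ℤ)) := by
    ext1 i
    have : t ^ i = SemidirectProduct.inr (Multiplicative.ofAdd (i : ℤ)) := by
      rw [← map_pow, ← ofAdd_nsmul]
      simp
    simp only [ρ, ψ, MonoidHom.comp_apply, FreeGroup.lift_apply_of, map_mul, map_pow, map_inv,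
      cond_true, cond_false, FreeGroup.map.of, this]
    rw [← map_inv, ← SemidirectProduct.inl_aut]
    simp [FreeGroup.shift]
  refine ⟨ψ, fun h => hw ?_⟩
  have h' := DFunLike.congr_fun hcomp w
  rw [MonoidHom.comp_apply, h, map_one, MonoidHom.comp_apply, eq_comm,
    map_eq_one_iff _ SemidirectProduct.inl_injective] at h'
  exact (map_eq_one_iff _ (FreeGroup.map_injective Nat.cast_injective)).1 h'

section GapCount

/-- `f` and `g` agree off a set of at most `C` elements. -/
def AlmostEq {ι A : Type*} (C : ℕ) (f g : ι → A) : Prop :=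
  ∃ s : Finset ι, s.card ≤ C ∧ ∀ i ∉ s, f i = g i

namespace AlmostEq

variable {ι A : Type*} {C D : ℕ} {f g h k : ι → A}

theorem refl (f : ι → A) : AlmostEq 0 f f := ⟨∅, by simp, fun _ _ => rfl⟩

theorem symm (h₁ : AlmostEq C f g) : AlmostEq C g f := by
  obtain ⟨s, hs, hs'⟩ := h₁
  exact ⟨s, hs, fun i hi => (hs' i hi).symm⟩

theorem comp₂ {B E : Type*} [DecidableEq ι] (op : A → B → E) {h k : ι → B}
    (h₁ : AlmostEq C f g) (h₂ : AlmostEq D h k) :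
    AlmostEq (C + D) (fun i => op (f i) (h i)) (fun i => op (g i) (k i)) := by
  obtain ⟨s, hs, hs'⟩ := h₁
  obtain ⟨t, ht, ht'⟩ := h₂
  refine ⟨s ∪ t, (Finset.card_union_le s t).trans (by omega), fun i hi => ?_⟩
  rw [Finset.mem_union, not_or] at hi
  simp only [hs' i hi.1, ht' i hi.2]

theorem trans [DecidableEq ι] (h₁ : AlmostEq C f g) (h₂ : AlmostEq D g h) :
    AlmostEq (C + D) f h := by
  obtain ⟨s, hs, hs'⟩ := h₁
  obtain ⟨t, ht, ht'⟩ := h₂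
  refine ⟨s ∪ t, (Finset.card_union_le s t).trans (by omega), fun i hi => ?_⟩
  rw [Finset.mem_union, not_or] at hi
  rw [hs' i hi.1, ht' i hi.2]

theorem add [Add A] [DecidableEq ι] (h₁ : AlmostEq C f g) (h₂ : AlmostEq D h k) :
    AlmostEq (C + D) (f + h) (g + k) := h₁.comp₂ (· + ·) h₂

theorem sub [Sub A] [DecidableEq ι] (h₁ : AlmostEq C f g) (h₂ : AlmostEq D h k) :
    AlmostEq (C + D) (f - h) (g - k) := h₁.comp₂ (· - ·) h₂

end AlmostEq

/-- One step in scanning a word on the letters `x = of false` and `y = of true` for subwords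
`y xⁱ y`: the state `some i` means that the part read so far ends in `y xⁱ`. -/
def gapStep : Option ℕ → Bool × Bool → Option ℕ
  | _, (true, true) => some 0
  | s, (false, true) => s.map (· + 1)
  | _, (_, false) => none

variable {R : Type*} [AddCommGroupWithOne R]

/-- The function sending `i` to the number of subwords `y xⁱ y` found when scanning a word from a
given state. -/
def gapCount (R : Type*) [AddCommGroupWithOne R] : Option ℕ → List (Bool × Bool) → ℕ → R
  | _, [] => 0
  | s, a :: L => (if a = (true, true) then s.elim 0 fun i => Pi.single i 1 else 0) +
      gapCount R (gapStep s a) L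

theorem gapCount_append (s : Option ℕ) (A B : List (Bool × Bool)) :
    gapCount R s (A ++ B) = gapCount R s A + gapCount R (A.foldl gapStep s) B := by
  induction A generalizing s with
  | nil => simp [gapCount]
  | cons a A ih => simp [gapCount, ih, add_assoc]

theorem gapCount_almostEq (s : Option ℕ) (L : List (Bool × Bool)) :
    AlmostEq 1 (gapCount R s L) (gapCount R none L) := by
  induction L generalizing s with
  | nil => exact ⟨∅, by simp, fun _ _ => rfl⟩
  | cons a L ih =>
    cases s with
    | none => exact ⟨∅, by simp, fun _ _ => rfl⟩
    | some i =>
      match a with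
      | (true, true) =>
        refine ⟨{i}, by simp, fun j hj => ?_⟩
        have hji : j ≠ i := by simpa using hj
        simp [gapCount, gapStep, hji]
      | (false, true) => simpa [gapCount, gapStep] using ih (some (i + 1))
      | (true, false) => exact ⟨∅, by simp, fun _ _ => by simp [gapCount, gapStep]⟩
      | (false, false) => exact ⟨∅, by simp, fun _ _ => by simp [gapCount, gapStep]⟩

theorem gapCount_append_almostEq (A B : List (Bool × Bool)) :
    AlmostEq 1 (gapCount R none (A ++ B)) (gapCount R none A + gapCount R none B) := by
  rw [gapCount_append]
  simpa using (AlmostEq.refl (gapCount R none A)).add (gapCount_almostEq _ B)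

/-- The antisymmetrization of `gapCount`. -/
def signedGapCount (R : Type*) [AddCommGroupWithOne R] (L : List (Bool × Bool)) : ℕ → R :=
  gapCount R none L - gapCount R none (FreeGroup.invRev L)

theorem signedGapCount_invRev (L : List (Bool × Bool)) :
    signedGapCount R (FreeGroup.invRev L) = -signedGapCount R L := by
  simp [signedGapCount, FreeGroup.invRev_invRev]

theorem signedGapCount_append_almostEq (A B : List (Bool × Bool)) :
    AlmostEq 2 (signedGapCount R (A ++ B)) (signedGapCount R A + signedGapCount R B) := by
  have := (gapCount_append_almostEq (R := R) A B).sub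
    (gapCount_append_almostEq (R := R) (FreeGroup.invRev B) (FreeGroup.invRev A))
  rw [← FreeGroup.invRev_append] at this
  have e : signedGapCount R A + signedGapCount R B = gapCount R none A + gapCount R none B -
      (gapCount R none (FreeGroup.invRev B) + gapCount R none (FreeGroup.invRev A)) := by
    unfold signedGapCount
    abel
  rw [e]
  exact this

theorem FreeGroup.IsReduced.exists_cancellation {α : Type*} {U V : List (α × Bool)}
    (hU : IsReduced U) (hV : IsReduced V) :
    ∃ A C B, U = A ++ C ∧ V = invRev C ++ B ∧ IsReduced (A ++ B) := by
  induction V generalizing U with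
  | nil => exact ⟨U, [], [], by simp, rfl, by simpa using hU⟩
  | cons v V ih =>
    by_cases h : IsReduced (U ++ v :: V)
    · exact ⟨U, [], v :: V, by simp, rfl, h⟩
    rcases List.eq_nil_or_concat' U with rfl | ⟨U, u, rfl⟩
    · exact absurd hV h
    have huv : u.1 = v.1 ∧ u.2 = !v.2 := by
      by_contra huv
      refine h ?_
      rw [IsReduced, List.isChain_append]
      refine ⟨hU, hV, ?_⟩
      grind
    obtain ⟨A, C, B, rfl, rfl, hAB⟩ := ih (U := U) (hU.infix ⟨[], [u], by simp⟩)
      (hV.infix ⟨[v], [], by simp⟩)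
    refine ⟨A, C ++ [u], B, by simp, ?_, hAB⟩
    have : v = (u.1, !u.2) := by
      ext <;> simp [huv]
    simp [invRev, this]

theorem signedGapCount_toWord_mul (g h : FreeGroup Bool) :
    AlmostEq 6 (signedGapCount R (g * h).toWord)
      (signedGapCount R g.toWord + signedGapCount R h.toWord) := by
  obtain ⟨A, C, B, hA, hB, hAB⟩ := FreeGroup.isReduced_toWord.exists_cancellation
    (U := g.toWord) (V := h.toWord) FreeGroup.isReduced_toWord
  have hgh : (g * h).toWord = A ++ B := by
    rw [← FreeGroup.mk_toWord (x := g), ← FreeGroup.mk_toWord (x := h), hA, hB,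
      ← hAB.reduce_eq, ← FreeGroup.toWord_mk]
    congr 1
    simp only [← FreeGroup.mul_mk, ← FreeGroup.inv_mk]
    group
  rw [hgh, hA, hB]
  have h₁ := (signedGapCount_append_almostEq (R := R) A C).add
    (signedGapCount_append_almostEq (R := R) (FreeGroup.invRev C) B)
  have e : signedGapCount R A + signedGapCount R C +
      (signedGapCount R (FreeGroup.invRev C) + signedGapCount R B) =
      signedGapCount R A + signedGapCount R B := by
    rw [signedGapCount_invRev]
    abel
  rw [e] at h₁
  exact (signedGapCount_append_almostEq A B).trans h₁.symm

/-- On values of a fixed word, the gap count is additive off a bounded number of gaps. -/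
theorem exists_almostEq_signedGapCount (u : FreeGroup ℕ) :
    ∃ C, ∀ ψ : FreeGroup ℕ →* FreeGroup Bool, AlmostEq C (signedGapCount R (ψ u).toWord)
      (FreeGroup.lift (fun i => Multiplicative.ofAdd (signedGapCount R (ψ (.of i)).toWord))
        u).toAdd := by
  induction u using FreeGroup.induction_on with
  | C1 => exact ⟨0, fun ψ => by simpa [signedGapCount, gapCount] using AlmostEq.refl _⟩
  | of i => exact ⟨0, fun ψ => by simpa using AlmostEq.refl _⟩
  | inv_of i _ =>
    exact ⟨0, fun ψ => by
      simpa [FreeGroup.toWord_inv, signedGapCount_invRev] using AlmostEq.refl _⟩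
  | mul a b ha hb =>
    obtain ⟨C, hC⟩ := ha
    obtain ⟨D, hD⟩ := hb
    refine ⟨6 + (C + D), fun ψ => ?_⟩
    rw [map_mul, map_mul, toAdd_mul]
    exact (signedGapCount_toWord_mul _ _).trans ((hC ψ).add (hD ψ))

end GapCount

namespace FreeGroup

theorem mk_flatMap {α β : Type*} (l : List β) (f : β → List (α × Bool)) :
    mk (l.flatMap f) = (l.map fun b => mk (f b)).prod := by
  induction l with
  | nil => rfl
  | cons b l ih => rw [List.flatMap_cons, ← mul_mk, ih, List.map_cons, List.prod_cons]

theorem mk_replicate {α : Type*} (n : ℕ) (a : α × Bool) : mk (List.replicate n a) = mk [a] ^ n := by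
  simp [pow_mk]

theorem isReduced_of_forall_snd {α : Type*} {L : List (α × Bool)} (h : ∀ a ∈ L, a.2 = true) :
    IsReduced L :=
  List.Pairwise.isChain <| List.pairwise_of_forall_mem_list fun a ha b hb _ => by
    rw [h a ha, h b hb]

end FreeGroup

theorem not_isRational_verbalSet_of_eWord_eq_zero {w : FreeGroup ℕ} (hw : w ≠ 1)
    (he : eWord w = 0) : ¬ IsRational (verbalSet w (FreeGroup Bool)) := by
  intro h
  obtain ⟨_, ⟨σ, _, M, rfl⟩, hM⟩ := h.exists_isRegular
  obtain ⟨ψ, hψ⟩ := exists_apply_ne_one hw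
  have hker : ∀ E : FreeGroup ℕ →* Multiplicative ℤ, E w = 1 :=
    eq_one_of_eWord_nsmul_eq_zero w (by simp [he])
  set V := (ψ w).toWord with hV
  have hV0 : V ≠ [] := by simpa [hV] using hψ
  set n := Fintype.card σ with hn
  obtain ⟨a, ha₁, ha₂⟩ : ∃ a : Bool × Bool, (a.1 = (V.head hV0).1 → a.2 = (V.head hV0).2) ∧
      ((V.getLast hV0).1 = a.1 → (V.getLast hV0).2 = !a.2) := by
    generalize V.head hV0 = b
    generalize V.getLast hV0 = c
    revert b c
    decide
  let W : ℕ → List (Bool × Bool) := fun k =>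
    List.replicate (n + n.factorial * k) a ++ (V ++ List.replicate n (a.1, !a.2))
  have hmk : ∀ k, FreeGroup.mk (W k) =
      .mk [a] ^ (n + n.factorial * k) * (ψ w * (.mk [a] ^ n)⁻¹) := by
    intro k
    have : FreeGroup.mk [(a.1, !a.2)] = (FreeGroup.mk [a])⁻¹ := rfl
    simp only [W, ← FreeGroup.mul_mk, FreeGroup.mk_replicate, this, inv_pow, hV,
      FreeGroup.mk_toWord]
  have hred : FreeGroup.IsReduced (W 0) := by
    have hrep : ∀ (m : ℕ) (b : Bool × Bool), FreeGroup.IsReduced (List.replicate m b) :=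
      fun m b => List.isChain_replicate_of_rel _ fun _ => rfl
    rw [FreeGroup.IsReduced, List.isChain_append, List.isChain_append]
    refine ⟨hrep _ _, ⟨FreeGroup.isReduced_toWord, hrep _ _, ?_⟩, ?_⟩
    · intro b hb c hc
      rw [List.getLast?_eq_some_getLast hV0] at hb
      obtain rfl : c = (a.1, !a.2) := List.eq_of_mem_replicate (List.mem_of_mem_head? hc)
      obtain rfl : _ = b := by simpa using hb
      exact ha₂
    · intro b hb c hc
      rw [List.head?_append_of_ne_nil _ hV0, List.head?_eq_some_head hV0] at hc
      obtain rfl : b = a := List.eq_of_mem_replicate (List.mem_of_mem_getLast? hb)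
      obtain rfl : _ = c := by simpa using hc
      exact ha₁
  have hmem : FreeGroup.mk (W 0) ∈ verbalSet w (FreeGroup Bool) :=
    ⟨(MulAut.conj (FreeGroup.mk [a] ^ n)).toMonoidHom.comp ψ, by simp [hmk, mul_assoc]⟩
  rw [← hM] at hmem
  obtain ⟨r, hr, hreach⟩ := M.exists_freeReaches hred hmem
  rw [DFA.freeReaches_append] at hreach
  obtain ⟨s, hs, hsr⟩ := hreach
  have hpump := DFA.FreeReaches.mk_mem hr
    (DFA.freeReaches_append.2 ⟨s, DFA.FreeReaches.pump (by simpa using hs) 1, hsr⟩)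
  rw [hM] at hpump
  obtain ⟨ψ', hψ'⟩ := hpump
  let ε : FreeGroup Bool →* Multiplicative ℤ := FreeGroup.lift fun _ => Multiplicative.ofAdd 1
  have h₁ := hker (ε.comp ψ')
  rw [MonoidHom.comp_apply, hψ'.trans (hmk 1), map_mul, map_mul, ← MonoidHom.comp_apply,
    hker, one_mul, map_inv, map_pow, map_pow, mul_one, pow_add, mul_inv_eq_one, mul_eq_left] at h₁
  have h₂ : n.factorial • (ε (.mk [a])).toAdd = 0 := congrArg Multiplicative.toAdd h₁
  have h₃ : (ε (.mk [a])).toAdd ≠ 0 := by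
    rcases a with ⟨a, _ | _⟩ <;> simp [ε]
  simp [h₃, n.factorial_ne_zero] at h₂

section GapWord

variable {R : Type*} [AddCommGroupWithOne R]

/-- The word `x ^ f j₁ y x ^ f j₂ y ⋯` for a list `j₁, j₂, …`, where `x = of false` and
`y = of true`. -/
def gapWord (f : ℕ → ℕ) (l : List ℕ) : List (Bool × Bool) :=
  l.flatMap fun j => List.replicate (f j) (false, true) ++ [(true, true)]

theorem snd_of_mem_gapWord {f : ℕ → ℕ} {l : List ℕ} {a : Bool × Bool} (ha : a ∈ gapWord f l) :
    a.2 = true := by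
  obtain ⟨j, -, ha⟩ := List.mem_flatMap.1 ha
  simp only [List.mem_append, List.mem_replicate, List.mem_singleton] at ha
  rcases ha with ⟨-, rfl⟩ | rfl <;> rfl

theorem gapCount_replicate_append (i m : ℕ) (L : List (Bool × Bool)) :
    gapCount R (some i) (List.replicate m (false, true) ++ (true, true) :: L) =
      Pi.single (i + m) 1 + gapCount R (some 0) L := by
  induction m generalizing i with
  | zero => simp [gapCount, gapStep]
  | succ m ih =>
    simp only [List.replicate_succ, List.cons_append, gapCount, gapStep, Option.map_some, ih]
    simp [add_assoc, add_comm 1 m]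

theorem gapCount_gapWord (f : ℕ → ℕ) (l : List ℕ) :
    gapCount R (some 0) (gapWord f l) = (l.map fun j => Pi.single (f j) 1).sum := by
  induction l with
  | nil => rfl
  | cons j l ih =>
    rw [gapWord, List.flatMap_cons, List.append_assoc, List.singleton_append,
      gapCount_replicate_append, ← gapWord, ih, List.map_cons, List.sum_cons, zero_add]

theorem gapCount_eq_zero {L : List (Bool × Bool)} (hL : ∀ a ∈ L, a.2 = false) (s : Option ℕ) :
    gapCount R s L = 0 := by
  induction L generalizing s with
  | nil => rfl
  | cons a L ih =>
    have ha : a ≠ (true, true) := by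
      rintro rfl
      simpa using hL _ List.mem_cons_self
    simp [gapCount, ha, ih fun b hb => hL b (List.mem_cons_of_mem _ hb)]

theorem signedGapCount_gapWord (f : ℕ → ℕ) (l : List ℕ) :
    AlmostEq 1 (signedGapCount R (gapWord f l)) (l.map fun j => Pi.single (f j) 1).sum := by
  have hinv : gapCount R none (FreeGroup.invRev (gapWord f l)) = 0 := by
    refine gapCount_eq_zero (fun a ha => ?_) _
    simp only [FreeGroup.invRev, List.mem_reverse, List.mem_map] at ha
    obtain ⟨b, hb, rfl⟩ := ha
    simp [snd_of_mem_gapWord hb]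
  rw [signedGapCount, hinv, sub_zero, ← gapCount_gapWord]
  exact (gapCount_almostEq _ _).symm

theorem DFA.FreeReaches.pump_gapWord {σ : Type*} [Fintype σ] {M : DFA (Bool × Bool) σ} {q r : σ}
    {l : List ℕ} (h : M.FreeReaches q (gapWord (fun _ => Fintype.card σ) l) r) :
    M.FreeReaches q
      (gapWord (fun j => Fintype.card σ + (Fintype.card σ).factorial * j) l) r := by
  induction l generalizing q with
  | nil => exact h
  | cons j l ih =>
    rw [gapWord, List.flatMap_cons, freeReaches_append, ← gapWord] at h ⊢
    obtain ⟨s, hs, hsr⟩ := h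
    rw [freeReaches_append] at hs
    obtain ⟨t, ht, hts⟩ := hs
    exact ⟨s, freeReaches_append.2 ⟨t, ht.pump j, hts⟩, ih hsr⟩

end GapWord

theorem not_isRational_verbalSet_of_one_lt_eWord {w : FreeGroup ℕ} (he : 1 < eWord w) :
    ¬ IsRational (verbalSet w (FreeGroup Bool)) := by
  intro h
  obtain ⟨_, ⟨σ, _, M, rfl⟩, hM⟩ := h.exists_isRegular
  obtain ⟨C, hC⟩ := exists_almostEq_signedGapCount (R := ZMod (eWord w)) w
  have : Fact (1 < eWord w) := ⟨he⟩
  set n := Fintype.card σ with hn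
  set f : ℕ → ℕ := fun j => n + n.factorial * j with hf
  have hfinj : Function.Injective f := fun i j hij => by
    simpa [hf, n.factorial_ne_zero] using hij
  set N := (C + 2) * eWord w with hN
  have hred : ∀ f, FreeGroup.IsReduced (gapWord f (List.range N)) := fun f =>
    FreeGroup.isReduced_of_forall_snd fun _ => snd_of_mem_gapWord
  have hmem : FreeGroup.mk (gapWord (fun _ => n) (List.range N)) ∈
      verbalSet w (FreeGroup Bool) := by
    rw [gapWord, FreeGroup.mk_flatMap, List.map_const', List.prod_replicate, List.length_range, hN,
      pow_mul]
    exact pow_eWord_mem_verbalSet w _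
  rw [← hM] at hmem
  obtain ⟨r, hr, hreach⟩ := M.exists_freeReaches (hred _) hmem
  have hpump := DFA.FreeReaches.mk_mem hr hreach.pump_gapWord
  rw [hM] at hpump
  obtain ⟨ψ, hψ⟩ := hpump
  have hCψ := hC ψ
  rw [eq_one_of_eWord_nsmul_eq_zero w (fun a => by ext; simp), hψ, FreeGroup.toWord_mk,
    (hred _).reduce_eq] at hCψ
  obtain ⟨s, hs, hs'⟩ := (signedGapCount_gapWord (R := ZMod (eWord w)) f _).symm.trans hCψ
  have hsub : (Finset.range N).image f ⊆ s := by
    intro i hi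
    obtain ⟨j, hj, rfl⟩ := Finset.mem_image.1 hi
    by_contra hjs
    have hval := hs' _ hjs
    have hsum : ((List.range N).map fun j => (Pi.single (f j) 1 : ℕ → ZMod (eWord w))).sum =
        ∑ j ∈ Finset.range N, Pi.single (f j) 1 := rfl
    rw [hsum, Finset.sum_apply, Finset.sum_eq_single_of_mem j hj fun i _ hij =>
      Pi.single_eq_of_ne (hfinj.ne hij.symm) _] at hval
    simp at hval
  have hcard := Finset.card_le_card hsub
  rw [Finset.card_image_of_injective _ hfinj, Finset.card_range] at hcard
  nlinarith

theorem exists_surjective_freeGroup_bool {X : Type*} {x y : X} (hxy : x ≠ y) :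
    ∃ ρ : FreeGroup X →* FreeGroup Bool, Function.Surjective ρ := by
  classical
  let ρ : FreeGroup X →* FreeGroup Bool :=
    FreeGroup.lift fun z => if z = x then .of false else .of true
  let ι : FreeGroup Bool →* FreeGroup X := FreeGroup.lift fun b => bif b then .of y else .of x
  have h : ρ.comp ι = MonoidHom.id _ := by
    ext b
    cases b <;> simp [ρ, ι, hxy.symm]
  exact ⟨ρ, fun g => ⟨ι g, DFunLike.congr_fun h g⟩⟩

/-- If `H` surjects onto a free non-abelian group, then for every proper word `w`
the set `w[H]` is not rational in `H`. -/
theorem stmt_16 {H X : Type*} [Group H] (x y : X) (hxy : x ≠ y)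
    (φ : H →* FreeGroup X) (hφ : Function.Surjective φ) :
    ∀ w : FreeGroup ℕ, IsProperWord w → ¬ IsRational (verbalSet w H) := by
  intro w hw h
  obtain ⟨ρ, hρ⟩ := exists_surjective_freeGroup_bool hxy
  have hsurj : Function.Surjective (ρ.comp φ) := hρ.comp hφ
  have himage := h.image (ρ.comp φ)
  rw [image_verbalSet _ hsurj] at himage
  rcases Nat.eq_zero_or_pos (eWord w) with he | he
  · exact not_isRational_verbalSet_of_eWord_eq_zero hw.ne_one he himage
  · exact not_isRational_verbalSet_of_one_lt_eWord (by have := hw.eWord_ne_one; omega) himage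
end
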